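/- For every integer q ≥ 1, let I_q be the ordinary (non-differential) ideal of C generated by det^{(1)}, det^{(2)}, …, det^{(q)}. Then I_q is saturated with respect to c11: for every f ∈ C, if c11^n · f ∈ I_q for some integer n ≥ 0, then f ∈ I_q. -/

import Mathlib

open MvPolynomial

/-- Variables of the differential polynomial ring `C = K{c₁₁, c₁₂, c₂₁, c₂₂}`:
the variable `((i, j), n)` represents `c_{ij}^{(n)}`, the `n`-th derivative of `c_{ij}`. -/
abbrev DVar : Type := (Fin 2 × Fin 2) × ℕ

/-- The differential polynomial ring `C = K{c₁₁, c₁₂, c₂₁, c₂₂}`. -/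
abbrev DiffPolyC (K : Type) [CommRing K] : Type := MvPolynomial DVar K

/-- `det = c₁₁·c₂₂ − c₁₂·c₂₁`. -/
noncomputable def detC (K : Type) [CommRing K] : DiffPolyC K :=
  X ((0, 0), 0) * X ((1, 1), 0) - X ((0, 1), 0) * X ((1, 0), 0)

/-- `D : C → C` is the unique derivation extending the derivation `δ` of `K` and shifting
variables, i.e. `D(c_{ij}^{(n)}) = c_{ij}^{(n+1)}`. -/
def IsDiffStructure {K : Type} [CommRing K] (δ : K → K) (D : DiffPolyC K → DiffPolyC K) : Prop :=
  (∀ a b : K, δ (a + b) = δ a + δ b) ∧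
  (∀ a b : K, δ (a * b) = δ a * b + a * δ b) ∧
  (∀ f g : DiffPolyC K, D (f + g) = D f + D g) ∧
  (∀ f g : DiffPolyC K, D (f * g) = D f * g + f * D g) ∧
  (∀ a : K, D (C a) = C (δ a)) ∧
  (∀ v : DVar, D (X v) = X (v.1, v.2 + 1))

section DetAux
open Finset

variable {σ K : Type} [Field K]

/-- Polynomials all of whose monomials have weight `< N`. -/
noncomputable def FF (K : Type) [Field K] {σ : Type} (ω : (σ →₀ ℕ) →+ ℕ) (N : ℕ) :
    Submodule K (MvPolynomial σ K) :=
  restrictSupport K {s | ω s < N}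

lemma mem_FF {ω : (σ →₀ ℕ) →+ ℕ} {N : ℕ} {f : MvPolynomial σ K} :
    f ∈ FF K ω N ↔ ∀ s, coeff s f ≠ 0 → ω s < N := by
  unfold FF
  rw [mem_restrictSupport_iff]
  constructor
  · intro h s hs
    exact h (by simpa using hs)
  · intro h s hs
    exact h s (by simpa using hs)

lemma FF_mono {ω : (σ →₀ ℕ) →+ ℕ} {N M : ℕ} (h : N ≤ M) {f : MvPolynomial σ K}
    (hf : f ∈ FF K ω N) : f ∈ FF K ω M :=
  mem_FF.2 fun s hs => lt_of_lt_of_le (mem_FF.1 hf s hs) h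

lemma FF_mono_mem {ω : (σ →₀ ℕ) →+ ℕ} {N : ℕ} {s : σ →₀ ℕ} (c : K) (h : ω s < N) :
    monomial s c ∈ FF K ω N := by
  classical
  rw [mem_FF]
  intro t ht
  rw [coeff_monomial] at ht
  split_ifs at ht with hst
  · rwa [← hst]
  · exact absurd rfl ht

lemma FF_mul {ω : (σ →₀ ℕ) →+ ℕ} {a b : ℕ} {f g : MvPolynomial σ K}
    (hf : f ∈ FF K ω a) (hg : g ∈ FF K ω (b + 1)) : f * g ∈ FF K ω (a + b) := by
  classical
  rw [mem_FF] at *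
  intro s hs
  rw [coeff_mul] at hs
  obtain ⟨⟨i, j⟩, hij, e⟩ := Finset.exists_ne_zero_of_sum_ne_zero hs
  have h1 := hf i (left_ne_zero_of_mul e)
  have h2 := hg j (right_ne_zero_of_mul e)
  rw [HasAntidiagonal.mem_antidiagonal] at hij
  rw [← hij, map_add]
  dsimp only at *
  omega

/-- `f` equals the monomial `s` plus terms of lower weight. -/
def Lead (ω : (σ →₀ ℕ) →+ ℕ) (f : MvPolynomial σ K) (s : σ →₀ ℕ) : Prop :=
  f - monomial s 1 ∈ FF K ω (ω s)

lemma Lead.le {ω : (σ →₀ ℕ) →+ ℕ} {f : MvPolynomial σ K} {s : σ →₀ ℕ} (h : Lead ω f s) :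
    f ∈ FF K ω (ω s + 1) := by
  have h1 := FF_mono (Nat.le_succ _) h
  have h2 : monomial s (1 : K) ∈ FF K ω (ω s + 1) := FF_mono_mem 1 (by omega)
  simpa using add_mem h1 h2

lemma Lead.mul {ω : (σ →₀ ℕ) →+ ℕ} {f g : MvPolynomial σ K} {s t : σ →₀ ℕ}
    (h : Lead ω f s) (h' : Lead ω g t) : Lead ω (f * g) (s + t) := by
  have e : f * g - monomial (s + t) 1 =
      (f - monomial s 1) * g + (g - monomial t 1) * monomial s 1 := by
    have : monomial (s + t) (1 : K) = monomial s 1 * monomial t 1 := by simp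
    rw [this]; ring
  unfold Lead
  rw [e, map_add]
  refine add_mem (FF_mul h h'.le) ?_
  rw [add_comm]
  exact FF_mul h' (FF_mono_mem 1 (by omega))

lemma Lead.self {ω : (σ →₀ ℕ) →+ ℕ} (s : σ →₀ ℕ) : Lead ω (monomial s (1 : K)) s := by
  simp [Lead]

lemma Lead.pow {ω : (σ →₀ ℕ) →+ ℕ} {f : MvPolynomial σ K} {s : σ →₀ ℕ}
    (h : Lead ω f s) (n : ℕ) : Lead ω (f ^ n) (n • s) := by
  induction n with
  | zero => simpa using Lead.self (K := K) (ω := ω) 0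
  | succ n ih => rw [pow_succ, succ_nsmul]; exact ih.mul h

lemma Lead.prod {ω : (σ →₀ ℕ) →+ ℕ} {ι : Type} (T : Finset ι) {f : ι → MvPolynomial σ K}
    {s : ι → σ →₀ ℕ} (h : ∀ k, Lead ω (f k) (s k)) :
    Lead ω (∏ k ∈ T, f k) (∑ k ∈ T, s k) := by
  classical
  induction T using Finset.induction_on with
  | empty => simpa using Lead.self (K := K) (ω := ω) 0
  | insert a T ha ih =>
    rw [Finset.prod_insert ha, Finset.sum_insert ha]; exact (h a).mul ih

lemma tri_sub {ω : (σ →₀ ℕ) →+ ℕ} (Φ : MvPolynomial σ K →ₗ[K] MvPolynomial σ K)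
    (hΦ : ∀ s, Lead ω (Φ (monomial s 1)) s) (N : ℕ) (g : MvPolynomial σ K)
    (hg : g ∈ FF K ω (N + 1)) : Φ g - g ∈ FF K ω N := by
  have e : Φ g - g = ∑ s ∈ g.support, coeff s g • (Φ (monomial s 1) - monomial s 1) := by
    conv_lhs => rw [g.as_sum]
    rw [map_sum, ← Finset.sum_sub_distrib]
    refine Finset.sum_congr rfl fun s _ => ?_
    have : monomial s (coeff s g) = coeff s g • monomial s (1 : K) := by
      rw [smul_monomial]; simp
    rw [this, map_smul, smul_sub]
  rw [e]
  refine sum_mem fun s hs => Submodule.smul_mem _ _ ?_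
  have := mem_FF.1 hg s (by simpa using hs)
  exact FF_mono (by omega) (hΦ s)

lemma FF_zero {ω : (σ →₀ ℕ) →+ ℕ} {g : MvPolynomial σ K} (hg : g ∈ FF K ω 0) : g = 0 := by
  ext s
  by_contra h
  exact absurd (mem_FF.1 hg s (by simpa using h)) (by omega)

lemma FF_exists (ω : (σ →₀ ℕ) →+ ℕ) (g : MvPolynomial σ K) : ∃ N, g ∈ FF K ω N := by
  refine ⟨g.support.sup ω + 1, mem_FF.2 fun s hs => ?_⟩
  have := Finset.le_sup (f := ω) (show s ∈ g.support by simpa using hs)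
  omega

lemma tri_inj {ω : (σ →₀ ℕ) →+ ℕ} (Φ : MvPolynomial σ K →ₗ[K] MvPolynomial σ K)
    (hΦ : ∀ s, Lead ω (Φ (monomial s 1)) s) : Function.Injective Φ := by
  rw [injective_iff_map_eq_zero]
  intro g hg
  obtain ⟨N, hN⟩ := FF_exists ω g
  induction N with
  | zero => exact FF_zero hN
  | succ N ih =>
    have := tri_sub Φ hΦ N g hN
    rw [hg, zero_sub] at this
    exact ih (by simpa using this)

lemma tri_surj {ω : (σ →₀ ℕ) →+ ℕ} (Φ : MvPolynomial σ K →ₗ[K] MvPolynomial σ K)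
    (hΦ : ∀ s, Lead ω (Φ (monomial s 1)) s) : Function.Surjective Φ := by
  intro g
  obtain ⟨N, hN⟩ := FF_exists ω g
  induction N generalizing g with
  | zero => exact ⟨0, by rw [FF_zero hN, map_zero]⟩
  | succ N ih =>
    obtain ⟨h, hh⟩ := ih _ (tri_sub Φ hΦ N g hN)
    exact ⟨g - h, by rw [map_sub, hh]; abel⟩

/-- the quadratic monomial -/
noncomputable def qm {ι : Type} (u v : ι → σ) (k : ι) : σ →₀ ℕ :=
  Finsupp.single (u k) 1 + Finsupp.single (v k) 1

/-- the part of a monomial divisible by products of the `qm`. -/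
noncomputable def apart {ι : Type} [Fintype ι] (u v : ι → σ) (s : σ →₀ ℕ) : σ →₀ ℕ :=
  ∑ k, min (s (u k)) (s (v k)) • qm u v k

lemma apart_le {ι : Type} [Fintype ι] (u v : ι → σ) (hu : Function.Injective u)
    (hv : Function.Injective v) (huv : ∀ k l, u k ≠ v l) (s : σ →₀ ℕ) : apart u v s ≤ s := by
  classical
  intro x
  unfold apart qm
  simp only [Finsupp.coe_finsetSum, Finset.sum_apply, Finsupp.coe_smul, Finsupp.coe_add,
    Pi.smul_apply, Pi.add_apply, Finsupp.single_apply, smul_eq_mul]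
  by_cases h : ∃ k, u k = x ∨ v k = x
  · obtain ⟨k, hk⟩ := h
    rw [Finset.sum_eq_single k]
    · rcases hk with rfl | rfl
      · rw [if_pos rfl, if_neg (huv _ _).symm]; simp
      · rw [if_pos rfl, if_neg (huv _ _)]; simp
    · intro l _ hl
      rcases hk with rfl | rfl
      · rw [if_neg fun h => hl (hu h), if_neg (huv _ _).symm]; simp
      · rw [if_neg (huv _ _), if_neg fun h => hl (hv h)]; simp
    · simp
  · push Not at h
    rw [Finset.sum_eq_zero]
    · exact Nat.zero_le _
    · intro k _
      rw [if_neg (h k).1, if_neg (h k).2]; simp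

/-- the deformation map on monomials -/
noncomputable def phi {ι : Type} [Fintype ι] (u v : ι → σ) (d : ι → MvPolynomial σ K)
    (s : σ →₀ ℕ) : MvPolynomial σ K :=
  (∏ k, d k ^ min (s (u k)) (s (v k))) * monomial (s - apart u v s) 1

theorem abstract_sat {ι : Type} [Fintype ι] (u v : ι → σ) (hu : Function.Injective u)
    (hv : Function.Injective v) (huv : ∀ k l, u k ≠ v l) (ω : (σ →₀ ℕ) →+ ℕ)
    (d : ι → MvPolynomial σ K) (hd : ∀ k, Lead ω (d k) (qm u v k))
    (x : σ) (hxu : ∀ k, x ≠ u k) (hxv : ∀ k, x ≠ v k) (n : ℕ) (f : MvPolynomial σ K)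
    (hf : X x ^ n * f ∈ Ideal.span (Set.range d)) : f ∈ Ideal.span (Set.range d) := by
  classical
  let Φ : MvPolynomial σ K →ₗ[K] MvPolynomial σ K := (basisMonomials σ K).constr K (phi u v d)
  have hΦ (s : σ →₀ ℕ) : Φ (monomial s 1) = phi u v d s := by
    have := (basisMonomials σ K).constr_basis K (phi u v d) s
    simpa [Φ] using this
  have hlead (s : σ →₀ ℕ) : Lead ω (Φ (monomial s 1)) s := by
    rw [hΦ]
    have h1 := Lead.prod (ω := ω) Finset.univ (f := fun k => d k ^ min (s (u k)) (s (v k)))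
      (s := fun k => min (s (u k)) (s (v k)) • qm u v k) (fun k => (hd k).pow _)
    have h2 := h1.mul (Lead.self (s - apart u v s))
    change Lead ω _ (apart u v s + _) at h2
    rwa [add_tsub_cancel_of_le (apart_le u v hu hv huv s)] at h2
  have hinj := tri_inj Φ hlead
  have hsurj := tri_surj Φ hlead
  -- compatibility with multiplication by quadratic monomials
  have hmk (k : ι) (g : MvPolynomial σ K) : Φ (monomial (qm u v k) 1 * g) = d k * Φ g := by
    suffices h : Φ ∘ₗ LinearMap.mulLeft K (monomial (qm u v k) 1) =
        LinearMap.mulLeft K (d k) ∘ₗ Φ from LinearMap.congr_fun h g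
    refine (basisMonomials σ K).ext fun s => ?_
    simp only [coe_basisMonomials, LinearMap.comp_apply, LinearMap.mulLeft_apply, monomial_mul,
      mul_one, hΦ]
    have hmin (l : ι) : min ((qm u v k + s) (u l)) ((qm u v k + s) (v l)) =
        (if l = k then 1 else 0) + min (s (u l)) (s (v l)) := by
      simp only [qm, Finsupp.coe_add, Pi.add_apply, Finsupp.single_apply, hu.eq_iff, hv.eq_iff,
        huv, (huv _ _).symm, eq_comm (a := k), if_false]
      split_ifs <;> omega
    have hap : apart u v (qm u v k + s) = qm u v k + apart u v s := by
      unfold apart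
      simp only [hmin, add_smul, Finset.sum_add_distrib, ite_smul, one_smul, zero_smul]
      simp
    unfold phi
    rw [hap, add_tsub_add_eq_tsub_left]
    simp only [hmin, pow_add, Finset.prod_mul_distrib, pow_ite, pow_one, pow_zero]
    simp [mul_assoc]
  have hX (m : ℕ) (g : MvPolynomial σ K) : Φ (X x ^ m * g) = X x ^ m * Φ g := by
    suffices h : Φ ∘ₗ LinearMap.mulLeft K (X x ^ m) =
        LinearMap.mulLeft K (X x ^ m) ∘ₗ Φ from LinearMap.congr_fun h g
    refine (basisMonomials σ K).ext fun s => ?_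
    simp only [coe_basisMonomials, LinearMap.comp_apply, LinearMap.mulLeft_apply, X_pow_eq_monomial,
      monomial_mul, mul_one, hΦ]
    have hmin (l : ι) : min ((Finsupp.single x m + s) (u l)) ((Finsupp.single x m + s) (v l)) =
        min (s (u l)) (s (v l)) := by
      simp [Finsupp.single_apply, hxu, hxv]
    have hap : apart u v (Finsupp.single x m + s) = apart u v s := by
      unfold apart
      simp only [hmin]
    unfold phi
    rw [hap, add_tsub_assoc_of_le (apart_le u v hu hv huv s)]
    simp only [hmin]
    rw [mul_left_comm, monomial_mul, mul_one]
  set J : Ideal (MvPolynomial σ K) :=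
    Ideal.span ((fun s => monomial s (1 : K)) '' Set.range (qm u v)) with hJ
  have hJI (g : MvPolynomial σ K) (hg : g ∈ J) : Φ g ∈ Ideal.span (Set.range d) := by
    rw [hJ, ← Set.range_comp, Ideal.span, Submodule.mem_span_range_iff_exists_fun] at hg
    obtain ⟨c, rfl⟩ := hg
    rw [map_sum]
    refine sum_mem fun k _ => ?_
    rw [smul_eq_mul, mul_comm]
    simp only [Function.comp_apply]
    rw [hmk]
    exact Ideal.mul_mem_right _ _ (Ideal.subset_span ⟨k, rfl⟩)
  have hIJ (h : MvPolynomial σ K) (hh : h ∈ Ideal.span (Set.range d)) : ∃ g ∈ J, Φ g = h := by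
    rw [Ideal.span, Submodule.mem_span_range_iff_exists_fun] at hh
    obtain ⟨c, rfl⟩ := hh
    choose c' hc' using fun k => hsurj (c k)
    refine ⟨∑ k, monomial (qm u v k) 1 * c' k, ?_, ?_⟩
    · exact sum_mem fun k _ => Ideal.mul_mem_right _ _
        (Ideal.subset_span ⟨_, ⟨k, rfl⟩, rfl⟩)
    · rw [map_sum]
      refine Finset.sum_congr rfl fun k _ => ?_
      rw [hmk, hc', smul_eq_mul, mul_comm]
  obtain ⟨g, rfl⟩ := hsurj f
  obtain ⟨g', hg', e⟩ := hIJ _ hf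
  rw [← hX] at e
  rw [hinj e] at hg'
  apply hJI
  rw [hJ, mem_ideal_span_monomial_image] at hg' ⊢
  intro s hs
  obtain ⟨_, ⟨k, rfl⟩, hk⟩ := hg' (Finsupp.single x n + s) (by
    rw [mem_support_iff, X_pow_eq_monomial, coeff_monomial_mul, one_mul]
    exact mem_support_iff.1 hs)
  refine ⟨_, ⟨k, rfl⟩, fun y => ?_⟩
  have h1 := hk y
  by_cases hy : x = y
  · subst hy
    simp [qm, Finsupp.single_apply, (hxu k).symm, (hxv k).symm]
  · simpa [Finsupp.single_apply, hy] using h1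

/-! Concrete part -/

/-- weights -/
def wtV (q : ℕ) (x : DVar) : ℕ :=
  if x.1 = (0, 0) then 2 * q ^ 2 + 2 * q + 2 * x.2 - 2 * x.2 ^ 2
  else if x.1 = (1, 1) then 2 * q ^ 2 + 2 * q + 1 - (2 * x.2 ^ 2 + 2 * x.2)
  else 2 * q ^ 2 + 2 * q + 1 - 2 * x.2 ^ 2

/-- first leading variable of `det^(k)` -/
def uV (k : ℕ) : DVar := if k % 2 = 1 then ((0, 0), k / 2 + 1) else ((0, 1), k / 2)
/-- second leading variable of `det^(k)` -/
def vV (k : ℕ) : DVar := if k % 2 = 1 then ((1, 1), k / 2) else ((1, 0), k / 2)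

lemma iter_mul {δ : K → K} {D : DiffPolyC K → DiffPolyC K} (hD : IsDiffStructure δ D)
    (a b : Fin 2 × Fin 2) (n : ℕ) :
    D^[n] (X (a, 0) * X (b, 0)) =
      ∑ ij ∈ antidiagonal n, n.choose ij.1 • (X (a, ij.1) * X (b, ij.2) : DiffPolyC K) := by
  obtain ⟨-, -, hadd, hmul, -, hX⟩ := hD
  let D' : DiffPolyC K →+ DiffPolyC K := AddMonoidHom.mk' D hadd
  have hD' : ∀ f, D f = D' f := fun _ => rfl
  induction n with
  | zero => simp
  | succ n ih =>
    rw [Finset.sum_antidiagonal_choose_succ_nsmul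
      (fun i j => (X (a, i) * X (b, j) : DiffPolyC K)) n]
    rw [Function.iterate_succ_apply', ih, hD', map_sum, ← Finset.sum_add_distrib]
    refine sum_congr rfl fun ⟨i, j⟩ hij => ?_
    rw [map_nsmul, ← hD', hmul, hX, hX, ← n.choose_symm_of_eq_add (HasAntidiagonal.mem_antidiagonal.1 hij).symm,
      smul_add, add_comm]

lemma iter_det {δ : K → K} {D : DiffPolyC K → DiffPolyC K} (hD : IsDiffStructure δ D) (n : ℕ) :
    D^[n] (detC K) =
      ∑ ij ∈ antidiagonal n, n.choose ij.1 •
        (X ((0, 0), ij.1) * X ((1, 1), ij.2) : DiffPolyC K) -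
      ∑ ij ∈ antidiagonal n, n.choose ij.1 •
        (X ((0, 1), ij.1) * X ((1, 0), ij.2) : DiffPolyC K) := by
  have hadd := hD.2.2.1
  let D' : DiffPolyC K →+ DiffPolyC K := AddMonoidHom.mk' D hadd
  have hD' : D = D' := rfl
  rw [← iter_mul hD, ← iter_mul hD, detC, hD', iterate_map_sub]

lemma wt00 {q i : ℕ} (h : i ≤ q) :
    (wtV q ((0, 0), i) : ℤ) = 2 * q ^ 2 + 2 * q + 2 * i - 2 * i ^ 2 := by
  have : i ^ 2 ≤ q ^ 2 := Nat.pow_le_pow_left h 2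
  have h1 : wtV q ((0, 0), i) = 2 * q ^ 2 + 2 * q + 2 * i - 2 * i ^ 2 := by simp [wtV]
  rw [h1, Nat.cast_sub (by omega)]
  push_cast; ring

lemma wt11 {q i : ℕ} (h : i ≤ q) :
    (wtV q ((1, 1), i) : ℤ) = 2 * q ^ 2 + 2 * q + 1 - 2 * i ^ 2 - 2 * i := by
  have : i ^ 2 ≤ q ^ 2 := Nat.pow_le_pow_left h 2
  have h1 : wtV q ((1, 1), i) = 2 * q ^ 2 + 2 * q + 1 - (2 * i ^ 2 + 2 * i) := by simp [wtV]
  rw [h1, Nat.cast_sub (by omega)]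
  push_cast; ring

lemma wt01 {q i : ℕ} (h : i ≤ q) :
    (wtV q ((0, 1), i) : ℤ) = 2 * q ^ 2 + 2 * q + 1 - 2 * i ^ 2 := by
  have : i ^ 2 ≤ q ^ 2 := Nat.pow_le_pow_left h 2
  have h1 : wtV q ((0, 1), i) = 2 * q ^ 2 + 2 * q + 1 - 2 * i ^ 2 := by simp [wtV]
  rw [h1, Nat.cast_sub (by omega)]
  push_cast; ring

lemma wt10 {q i : ℕ} (h : i ≤ q) :
    (wtV q ((1, 0), i) : ℤ) = 2 * q ^ 2 + 2 * q + 1 - 2 * i ^ 2 := by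
  have : i ^ 2 ≤ q ^ 2 := Nat.pow_le_pow_left h 2
  have h1 : wtV q ((1, 0), i) = 2 * q ^ 2 + 2 * q + 1 - 2 * i ^ 2 := by simp [wtV]
  rw [h1, Nat.cast_sub (by omega)]
  push_cast; ring

lemma wt_xy_odd {q m i j : ℕ} (hk : 2 * m + 1 ≤ q) (h : i + j = 2 * m + 1) (hne : i ≠ m + 1) :
    wtV q ((0, 0), i) + wtV q ((1, 1), j) < wtV q ((0, 0), m + 1) + wtV q ((1, 1), m) := by
  zify
  rw [wt00 (by omega), wt11 (by omega), wt00 (by omega), wt11 (by omega)]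
  obtain ⟨t, ht⟩ : ∃ t : ℤ, (i : ℤ) = m + 1 + t := ⟨i - (m + 1), by ring⟩
  have hj : (j : ℤ) = m - t := by omega
  have ht0 : 0 < t ^ 2 := by have : t ≠ 0 := by omega
                             positivity
  rw [ht, hj]; push_cast; nlinarith

lemma wt_zw_odd {q m i j : ℕ} (hk : 2 * m + 1 ≤ q) (h : i + j = 2 * m + 1) :
    wtV q ((0, 1), i) + wtV q ((1, 0), j) < wtV q ((0, 0), m + 1) + wtV q ((1, 1), m) := by
  zify
  rw [wt01 (by omega), wt10 (by omega), wt00 (by omega), wt11 (by omega)]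
  obtain ⟨t, ht⟩ : ∃ t : ℤ, (i : ℤ) = m + 1 + t := ⟨i - (m + 1), by ring⟩
  have hj : (j : ℤ) = m - t := by omega
  rw [ht, hj]; push_cast; nlinarith [sq_pos_of_ne_zero (show 2 * t + 1 ≠ 0 by omega)]

lemma wt_xy_even {q m i j : ℕ} (hk : 2 * m ≤ q) (h : i + j = 2 * m) :
    wtV q ((0, 0), i) + wtV q ((1, 1), j) < wtV q ((0, 1), m) + wtV q ((1, 0), m) := by
  zify
  rw [wt00 (by omega), wt11 (by omega), wt01 (by omega), wt10 (by omega)]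
  obtain ⟨t, ht⟩ : ∃ t : ℤ, (i : ℤ) = m + t := ⟨i - m, by ring⟩
  have hj : (j : ℤ) = m - t := by omega
  rw [ht, hj]; nlinarith [sq_pos_of_ne_zero (show 2 * t - 1 ≠ 0 by omega)]

lemma wt_zw_even {q m i j : ℕ} (hk : 2 * m ≤ q) (h : i + j = 2 * m) (hne : i ≠ m) :
    wtV q ((0, 1), i) + wtV q ((1, 0), j) < wtV q ((0, 1), m) + wtV q ((1, 0), m) := by
  zify
  rw [wt01 (by omega), wt10 (by omega), wt01 (by omega), wt10 (by omega)]
  obtain ⟨t, ht⟩ : ∃ t : ℤ, (i : ℤ) = m + t := ⟨i - m, by ring⟩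
  have hj : (j : ℤ) = m - t := by omega
  have ht0 : 0 < t ^ 2 := by have : t ≠ 0 := by omega
                             positivity
  rw [ht, hj]; nlinarith

lemma term_eq (n : ℕ) (a b : DVar) : n • (X a * X b : DiffPolyC K) =
    monomial (Finsupp.single a 1 + Finsupp.single b 1) (n : K) := by
  have : (X a * X b : DiffPolyC K) = monomial (Finsupp.single a 1 + Finsupp.single b 1) 1 := by
    simp [X, monomial_mul]
  rw [this, ← map_nsmul, nsmul_one]

lemma wt_pair (q : ℕ) (a b : DVar) :
    Finsupp.weight (wtV q) (Finsupp.single a 1 + Finsupp.single b 1) = wtV q a + wtV q b := by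
  simp [Finsupp.weight_single]

lemma term_mem {q : ℕ} {N n : ℕ} {a b : DVar} (h : wtV q a + wtV q b < N) :
    n • (X a * X b : DiffPolyC K) ∈ FF K (Finsupp.weight (wtV q)) N := by
  rw [term_eq]
  exact FF_mono_mem _ (by rwa [wt_pair])

lemma lead_scale {ω : (σ →₀ ℕ) →+ ℕ} {f : MvPolynomial σ K} {s : σ →₀ ℕ} {c : K} (hc : c ≠ 0)
    (h : f - monomial s c ∈ FF K ω (ω s)) : Lead ω (c⁻¹ • f) s := by
  have := Submodule.smul_mem _ c⁻¹ h
  rwa [smul_sub, smul_monomial, smul_eq_mul, inv_mul_cancel₀ hc] at this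

lemma exists_lead [CharZero K] {δ : K → K} {D : DiffPolyC K → DiffPolyC K}
    (hD : IsDiffStructure δ D) {q k : ℕ} (hk : k ≤ q) :
    ∃ c : K, c ≠ 0 ∧ Lead (Finsupp.weight (wtV q)) (c • D^[k] (detC K)) (qm uV vV k) := by
  rcases Nat.even_or_odd' k with ⟨m, rfl | rfl⟩
  · have hc : (-((2 * m).choose m : K)) ≠ 0 := by
      rw [neg_ne_zero, Nat.cast_ne_zero]; exact (Nat.choose_pos (by omega)).ne'
    refine ⟨_, inv_ne_zero hc, lead_scale hc ?_⟩
    have hq : qm uV vV (2 * m) = Finsupp.single ((0, 1), m) 1 + Finsupp.single ((1, 0), m) 1 := by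
      simp [qm, uV, vV]
    rw [hq, wt_pair, iter_det hD, map_neg, sub_neg_eq_add]
    rw [← Finset.add_sum_erase (antidiagonal (2 * m)) (fun ij => (2 * m).choose ij.1 •
        (X ((0, 1), ij.1) * X ((1, 0), ij.2) : DiffPolyC K)) (a := (m, m))
        (by simp [two_mul]), term_eq _ ((0, 1), m), sub_add_eq_sub_sub, sub_right_comm,
        sub_add_cancel]
    refine sub_mem (sum_mem ?_) (sum_mem ?_)
    · rintro ⟨i, j⟩ hij
      exact term_mem (wt_xy_even hk (by simpa using hij))
    · rintro ⟨i, j⟩ hij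
      simp only [mem_erase, HasAntidiagonal.mem_antidiagonal, ne_eq, Prod.mk.injEq] at hij
      exact term_mem (wt_zw_even hk hij.2 (by omega))
  · have hc : ((2 * m + 1).choose (m + 1) : K) ≠ 0 := by
      rw [Nat.cast_ne_zero]; exact (Nat.choose_pos (by omega)).ne'
    refine ⟨_, inv_ne_zero hc, lead_scale hc ?_⟩
    have hq : qm uV vV (2 * m + 1) =
        Finsupp.single ((0, 0), m + 1) 1 + Finsupp.single ((1, 1), m) 1 := by
      have h1 : (2 * m + 1) % 2 = 1 := by omega
      have h2 : (2 * m + 1) / 2 = m := by omega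
      simp [qm, uV, vV, h1, h2]
    rw [hq, wt_pair, iter_det hD]
    rw [← Finset.add_sum_erase (antidiagonal (2 * m + 1)) (fun ij => (2 * m + 1).choose ij.1 •
        (X ((0, 0), ij.1) * X ((1, 1), ij.2) : DiffPolyC K)) (a := (m + 1, m))
        (by simp; omega), term_eq _ ((0, 0), m + 1), sub_right_comm, add_sub_cancel_left]
    refine sub_mem (sum_mem ?_) (sum_mem ?_)
    · rintro ⟨i, j⟩ hij
      simp only [mem_erase, HasAntidiagonal.mem_antidiagonal, ne_eq, Prod.mk.injEq] at hij
      exact term_mem (wt_xy_odd hk hij.2 (by omega))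
    · rintro ⟨i, j⟩ hij
      exact term_mem (wt_zw_odd hk (by simpa using hij))

lemma uV_inj : Function.Injective uV := by
  intro k l h
  unfold uV at h
  split_ifs at h <;> simp at h <;> omega

lemma vV_inj : Function.Injective vV := by
  intro k l h
  unfold vV at h
  split_ifs at h <;> simp at h <;> omega

lemma uV_ne_vV (k l : ℕ) : uV k ≠ vV l := by
  intro h
  unfold uV vV at h
  split_ifs at h <;> simp at h

end DetAux

/-- For every `q ≥ 1`, the ordinary ideal `I_q` of `C` generated by
`det⁽¹⁾, …, det⁽q⁾` is saturated with respect to `c₁₁`: if `c₁₁ ^ n · f ∈ I_q` for some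
`n ≥ 0`, then `f ∈ I_q`. -/
theorem detPrime_truncated_saturated {K : Type} [Field K] [CharZero K]
    (δ : K → K) (D : DiffPolyC K → DiffPolyC K)
    (hD : IsDiffStructure δ D)
    (q : ℕ) (hq : 1 ≤ q)
    (f : DiffPolyC K) (n : ℕ)
    (hf : (X ((0, 0), 0) : DiffPolyC K) ^ n * f ∈
      Ideal.span {g : DiffPolyC K | ∃ i : ℕ, 1 ≤ i ∧ i ≤ q ∧ g = D^[i] (detC K)}) :
    f ∈ Ideal.span {g : DiffPolyC K | ∃ i : ℕ, 1 ≤ i ∧ i ≤ q ∧ g = D^[i] (detC K)} := by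
  classical
  choose c hc0 hc using fun k : Fin q => exists_lead hD (q := q) (k := k + 1) (by omega)
  have hspan : Ideal.span {g : DiffPolyC K | ∃ i : ℕ, 1 ≤ i ∧ i ≤ q ∧ g = D^[i] (detC K)} =
      Ideal.span (Set.range fun k : Fin q => c k • D^[(k : ℕ) + 1] (detC K)) := by
    apply le_antisymm
    · rw [Ideal.span_le]
      rintro _ ⟨i, h1, h2, rfl⟩
      obtain ⟨i, rfl⟩ : ∃ j, i = j + 1 := ⟨i - 1, by omega⟩
      have hm : c ⟨i, by omega⟩ • D^[i + 1] (detC K) ∈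
          Ideal.span (Set.range fun k : Fin q => c k • D^[(k : ℕ) + 1] (detC K)) :=
        Ideal.subset_span ⟨⟨i, by omega⟩, rfl⟩
      have := Submodule.smul_of_tower_mem _ (c ⟨i, by omega⟩)⁻¹ hm
      rwa [smul_smul, inv_mul_cancel₀ (hc0 _), one_smul] at this
    · rw [Ideal.span_le]
      rintro _ ⟨k, rfl⟩
      exact Submodule.smul_of_tower_mem _ _
        (Ideal.subset_span ⟨(k : ℕ) + 1, by omega, by omega, rfl⟩)
  rw [hspan] at hf ⊢
  have hs : Function.Injective fun k : Fin q => (k : ℕ) + 1 := by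
    intro a b h
    ext
    simpa using h
  refine abstract_sat (fun k : Fin q => uV (k + 1)) (fun k : Fin q => vV (k + 1))
    (uV_inj.comp hs) (vV_inj.comp hs) (fun _ _ => uV_ne_vV _ _) (Finsupp.weight (wtV q)) _
    hc ((0, 0), 0) ?_ ?_ n f hf
  · intro k h
    unfold uV at h
    split_ifs at h <;> simp at h
  · intro k h
    unfold vV at h
    split_ifs at h <;> simp at h
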